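/- There exist no real numbers A_0,…,A_7, B_0,…,B_7, B̂_1,…,B̂_7 satisfying the seventh-order conditions and normalization — namely Σ_{i=0}^{7} A_i = 0; Σ_{i=0}^{7} A_i(−i)^{m+1} = (m+1)Σ_{i=0}^{7} B_i(−i)^m = (m+1)Σ_{i=1}^{7} B̂_i(−i)^m for each m = 0,1,…,6 (with the convention 0⁰ = 1); and Σ_{i=0}^{7} A_i(−i) = Σ_{i=0}^{7} B_i = Σ_{i=1}^{7} B̂_i = 1 — such that, with a_i := Σ_{j=0}^{i} A_j for 0 ≤ i ≤ 6 and b_i := Σ_{j=0}^{i} B_j − 1 + (1/2)δ_{i,0} for 0 ≤ i ≤ 6 (δ_{i,0} the Kronecker delta), both Σ_{m=0}^{6} a_m T_m(x) > 0 and Σ_{m=0}^{6} b_m T_m(x) > 0 hold for all x ∈ [−1,1]. -/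

import Mathlib

/-!
Write `p = Σ a_m T_m` and `q = Σ b_m T_m`. The order and normalization conditions make the values
of `p` and `q` at any fixed point affine functions of seven free parameters (the scheme `B̂` is
determined by `A` and imposes nothing further), so by Farkas duality infeasibility is witnessed by a
nonnegative combination of point values that equals a negative constant on the whole affine family.
Such a combination already exists at nodes in `(1/6)ℤ`: `p` at `-1/2, -1/3` and `q` at
`-1, -5/6, -1/6, 0, 5/6, 1`, with weights
* `239384/2403407`, `118098/2403407` for `p`,
* `10728396/132187385`, `31785858/60085175`, `718794/12017035`, `1609389/60085175`,
  `88830108/660936925`, `48276/2403407` for `q`.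

With these weights, which sum to `1`, the combination is about `-0.229`, although every term is
positive.
-/

/-- The `m`-th Chebyshev polynomial of the first kind. -/
noncomputable def chebT : ℕ → ℝ → ℝ
  | 0, _ => 1
  | 1, x => x
  | n + 2, x => 2 * x * chebT (n + 1) x - chebT n x

/-- Sixth-order barrier: there are no real coefficients `A_0,…,A_7`, `B_0,…,B_7`,
`B̂_1,…,B̂_7` satisfying the seventh-order conditions and normalization such that the two
reformulated generating polynomials `Σ_{m=0}^{6} a_m T_m(x)` and `Σ_{m=0}^{6} b_m T_m(x)`,
with `a_i = Σ_{j≤i} A_j` and `b_i = Σ_{j≤i} B_j − 1 + δ_{i,0}/2`, are both strictly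
positive on `[−1,1]`. -/
theorem stmt13 :
    ¬ ∃ (A B Bh : ℕ → ℝ),
      (∑ i ∈ Finset.range 8, A i = 0) ∧
      (∀ m ∈ Finset.range 7,
        (∑ i ∈ Finset.range 8, A i * (-(i : ℝ)) ^ (m + 1)
          = ((m : ℝ) + 1) * ∑ i ∈ Finset.range 8, B i * (-(i : ℝ)) ^ m) ∧
        (∑ i ∈ Finset.range 8, A i * (-(i : ℝ)) ^ (m + 1)
          = ((m : ℝ) + 1) * ∑ i ∈ Finset.Icc 1 7, Bh i * (-(i : ℝ)) ^ m)) ∧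
      (∑ i ∈ Finset.range 8, A i * (-(i : ℝ)) = 1) ∧
      (∑ i ∈ Finset.range 8, B i = 1) ∧
      (∑ i ∈ Finset.Icc 1 7, Bh i = 1) ∧
      (∀ x ∈ Set.Icc (-1 : ℝ) 1,
        0 < ∑ m ∈ Finset.range 7, (∑ j ∈ Finset.range (m + 1), A j) * chebT m x) ∧
      (∀ x ∈ Set.Icc (-1 : ℝ) 1,
        0 < ∑ m ∈ Finset.range 7,
          ((∑ j ∈ Finset.range (m + 1), B j) - 1 + (if m = 0 then (1 : ℝ)/2 else 0))
            * chebT m x) := by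
  rintro ⟨A, B, Bh, hA0, hord, hA1, hB, -, hp, hq⟩
  have e1 := (hord 1 (by simp)).1
  have e2 := (hord 2 (by simp)).1
  have e3 := (hord 3 (by simp)).1
  have e4 := (hord 4 (by simp)).1
  have e5 := (hord 5 (by simp)).1
  have e6 := (hord 6 (by simp)).1
  have p1 := hp (-1 / 2) (by constructor <;> norm_num)
  have p2 := hp (-1 / 3) (by constructor <;> norm_num)
  have q1 := hq (-1) (by constructor <;> norm_num)
  have q2 := hq (-5 / 6) (by constructor <;> norm_num)
  have q3 := hq (-1 / 6) (by constructor <;> norm_num)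
  have q4 := hq 0 (by constructor <;> norm_num)
  have q5 := hq (5 / 6) (by constructor <;> norm_num)
  have q6 := hq 1 (by constructor <;> norm_num)
  clear hp hq hord
  norm_num [Finset.sum_range_succ, chebT] at hA0 hA1 hB e1 e2 e3 e4 e5 e6 p1 p2 q1 q2 q3 q4 q5 q6
  -- The system is linear in the sixteen coefficients; `linarith` recovers the weights above.
  linarith
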